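/- Suppose that Σ_{i∈U} p_i ≥ αk for some α > 1. Then for every item i ∈ U, p_i ≤ (Σ_{j∈U} exp(u_j) / exp(u_i)) · (Pr_{PL+C}(R_{i=1}) + k(α e^{1-α})^k / (1 - (α e^{1-α})^k)), where R_{i=1} is the set of length-k rankings with item i in first position. -/

import Mathlib

open scoped Classical
open Finset

noncomputable section

/-- Weight of a consideration set `C`: each item in `C` is considered (prob `p i`),
each item outside is not considered (prob `1 - p j`). -/
def considerWeight (n : ℕ) (p : Fin n → ℝ) (C : Finset (Fin n)) : ℝ :=
  (∏ i ∈ C, p i) * ∏ j ∈ Cᶜ, (1 - p j)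

/-- Normalizing constant `z_{k,p}`: total weight of consideration sets of size at least `k`. -/
def zConst (n k : ℕ) (p : Fin n → ℝ) : ℝ :=
  ∑ C ∈ Finset.univ.filter (fun C : Finset (Fin n) => k ≤ C.card), considerWeight n p C

/-- Probability of consideration set `C` (conditioned on `|C| ≥ k`). -/
def prC (n k : ℕ) (p : Fin n → ℝ) (C : Finset (Fin n)) : ℝ :=
  if k ≤ C.card then considerWeight n p C / zConst n k p else 0

/-- Plackett–Luce probability of the length-`k` ranking `r` given consideration set `C`. -/
def prPL (n k : ℕ) (u : Fin n → ℝ) (r : Fin k ↪ Fin n) (C : Finset (Fin n)) : ℝ :=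
  if ∀ t : Fin k, r t ∈ C then
    ∏ t : Fin k, Real.exp (u (r t)) /
      ∑ j ∈ C \ (Finset.Iio t).image r, Real.exp (u j)
  else 0

/-- Plackett–Luce-with-consideration (PL+C) probability of the ranking `r`. -/
def prPLC (n k : ℕ) (u p : Fin n → ℝ) (r : Fin k ↪ Fin n) : ℝ :=
  ∑ C : Finset (Fin n), prC n k p C * prPL n k u r C

/-- PL probability of a set of rankings. -/
def prPLset (n k : ℕ) (u : Fin n → ℝ) (R : Finset (Fin k ↪ Fin n)) (C : Finset (Fin n)) : ℝ :=
  ∑ r ∈ R, prPL n k u r C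

/-- PL+C probability of a set of rankings. -/
def prPLCset (n k : ℕ) (u p : Fin n → ℝ) (R : Finset (Fin k ↪ Fin n)) : ℝ :=
  ∑ r ∈ R, prPLC n k u p r

/-- `R_{i≤ℓ}`: the set of length-`k` rankings with item `i` among the top `ℓ` positions. -/
def topSet (n k : ℕ) (i : Fin n) (ℓ : ℕ) : Finset (Fin k ↪ Fin n) :=
  Finset.univ.filter (fun r => ∃ t : Fin k, (t : ℕ) < ℓ ∧ r t = i)

/-
Conditioned on a consideration set `C ∋ i`, the model ranks `i` first with probability
`exp (u i) / ∑ j ∈ C, exp (u j)`, which is smallest when `C` is the whole universe. Conditioning on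
the increasing event `k ≤ |C|` can only make it likelier that `i` is considered. Hence `i` comes
first with probability at least `p i * exp (u i) / ∑ j, exp (u j)`. The `α`-dependent term is only
slack: it is nonnegative because `α * exp (1 - α) ≤ 1`.
-/

section LuceChoice

variable {ι : Type*} (u : ι → ℝ)

/-- The Luce (multinomial logit) choice probability: the chance that `i` is chosen from the set `C`
under utilities `u`. It is meaningful only for `i ∈ C`. -/
def luceChoice (C : Finset ι) (i : ι) : ℝ :=
  Real.exp (u i) / ∑ j ∈ C, Real.exp (u j)

lemma luceChoice_nonneg (C : Finset ι) (i : ι) : 0 ≤ luceChoice u C i :=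
  div_nonneg (Real.exp_nonneg _) (sum_nonneg fun _ _ => Real.exp_nonneg _)

lemma sum_luceChoice {C : Finset ι} (hC : C.Nonempty) : ∑ i ∈ C, luceChoice u C i = 1 := by
  have hpos : 0 < ∑ j ∈ C, Real.exp (u j) := sum_pos (fun _ _ => Real.exp_pos _) hC
  simp only [luceChoice, ← sum_div, div_self hpos.ne']

lemma luceChoice_le_of_subset {C D : Finset ι} (hC : C.Nonempty) (hCD : C ⊆ D) (i : ι) :
    luceChoice u D i ≤ luceChoice u C i :=
  div_le_div_of_nonneg_left (Real.exp_nonneg _) (sum_pos (fun _ _ => Real.exp_pos _) hC)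
    (sum_le_sum_of_subset_of_nonneg hCD fun _ _ _ => Real.exp_nonneg _)

end LuceChoice

lemma sum_embedding_tail_of_zero_eq {ι M : Type*} [Fintype ι] [DecidableEq ι] [AddCommMonoid M]
    {k : ℕ} (i : ι) (f : (Fin k ↪ ι) → M) :
    ∑ r : Fin (k + 1) ↪ ι with r 0 = i, f (Fin.Embedding.tail r) =
      ∑ s : Fin k ↪ ι with ∀ t, s t ≠ i, f s := by
  refine sum_bij (fun r _ => Fin.Embedding.tail r) ?maps ?inj ?surj fun _ _ => rfl
  case maps =>
    intro r hr
    obtain rfl := (mem_filter.1 hr).2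
    exact mem_filter.2 ⟨mem_univ _, fun t => r.injective.ne (Fin.succ_ne_zero t)⟩
  case inj =>
    intro r hr r' hr' htail
    have hhead : r 0 = r' 0 := (mem_filter.1 hr).2.trans (mem_filter.1 hr').2.symm
    ext t
    cases t using Fin.cases with
    | zero => exact hhead
    | succ t => exact DFunLike.congr_fun htail t
  case surj =>
    intro s hs
    have hi : i ∉ Set.range s := fun ⟨t, ht⟩ => (mem_filter.1 hs).2 t ht
    exact ⟨Fin.Embedding.cons s hi, by simp, Fin.Embedding.tail_cons s _⟩

section PlackettLuce

variable {n k : ℕ} (u : Fin n → ℝ)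

lemma prPL_nonneg (r : Fin k ↪ Fin n) (C : Finset (Fin n)) : 0 ≤ prPL n k u r C := by
  unfold prPL
  split_ifs
  · exact prod_nonneg fun t _ => luceChoice_nonneg u _ (r t)
  · exact le_rfl

lemma prPL_eq_zero_of_notMem {r : Fin k ↪ Fin n} {C : Finset (Fin n)} {t : Fin k}
    (ht : r t ∉ C) : prPL n k u r C = 0 :=
  if_neg fun h => ht (h t)

lemma sdiff_image_Iio_succ (r : Fin (k + 1) ↪ Fin n) (C : Finset (Fin n)) (t : Fin k) :
    C \ (Iio t.succ).image r = C.erase (r 0) \ (Iio t).image (Fin.Embedding.tail r) := by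
  ext x
  simp only [mem_sdiff, mem_image, mem_Iio, mem_erase, Fin.exists_fin_succ, Fin.succ_pos,
    Fin.succ_lt_succ_iff, Fin.Embedding.coe_tail, Fin.tail]
  grind

lemma prPL_succ {r : Fin (k + 1) ↪ Fin n} {C : Finset (Fin n)} (h0 : r 0 ∈ C) :
    prPL n (k + 1) u r C =
      luceChoice u C (r 0) * prPL n k u (Fin.Embedding.tail r) (C.erase (r 0)) := by
  have hmem : (∀ t, r t ∈ C) ↔ ∀ t, Fin.Embedding.tail r t ∈ C.erase (r 0) := by
    simp [Fin.forall_fin_succ, Fin.tail, h0]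
  have hIio : Iio (0 : Fin (k + 1)) = ∅ := Finset.Iio_bot
  simp only [prPL, luceChoice, hmem, mul_ite, mul_zero, Fin.prod_univ_succ, sdiff_image_Iio_succ,
    hIio, image_empty, sdiff_empty]
  rfl

lemma sum_prPL_zero_eq {C : Finset (Fin n)} {i : Fin n} (hi : i ∈ C) :
    ∑ r : Fin (k + 1) ↪ Fin n with r 0 = i, prPL n (k + 1) u r C =
      luceChoice u C i * ∑ s : Fin k ↪ Fin n, prPL n k u s (C.erase i) := by
  have hrange : ∀ s : Fin k ↪ Fin n, prPL n k u s (C.erase i) ≠ 0 → ∀ t, s t ≠ i := by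
    rintro s hs t rfl
    exact hs (prPL_eq_zero_of_notMem u (notMem_erase (s t) C))
  calc ∑ r : Fin (k + 1) ↪ Fin n with r 0 = i, prPL n (k + 1) u r C
      = ∑ r : Fin (k + 1) ↪ Fin n with r 0 = i,
          luceChoice u C i * prPL n k u (Fin.Embedding.tail r) (C.erase i) := by
        refine sum_congr rfl fun r hr => ?_
        obtain rfl := (mem_filter.1 hr).2
        exact prPL_succ u hi
    _ = luceChoice u C i * ∑ s : Fin k ↪ Fin n with ∀ t, s t ≠ i,
          prPL n k u s (C.erase i) := by
        rw [← mul_sum, sum_embedding_tail_of_zero_eq i fun s => prPL n k u s (C.erase i)]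
    _ = luceChoice u C i * ∑ s : Fin k ↪ Fin n, prPL n k u s (C.erase i) := by
        rw [sum_filter_of_ne fun s _ => hrange s]

lemma sum_prPL_eq_one {C : Finset (Fin n)} (hC : k ≤ #C) :
    ∑ r : Fin k ↪ Fin n, prPL n k u r C = 1 := by
  induction k generalizing C with
  | zero => simp [prPL]
  | succ k ih =>
    have hnotMem : ∀ i ∉ C, ∑ r : Fin (k + 1) ↪ Fin n with r 0 = i, prPL n (k + 1) u r C = 0 := by
      refine fun i hi => sum_eq_zero fun r hr => prPL_eq_zero_of_notMem u (t := 0) ?_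
      rwa [(mem_filter.1 hr).2]
    calc ∑ r : Fin (k + 1) ↪ Fin n, prPL n (k + 1) u r C
        = ∑ i, ∑ r : Fin (k + 1) ↪ Fin n with r 0 = i, prPL n (k + 1) u r C :=
          (sum_fiberwise univ (fun r : Fin (k + 1) ↪ Fin n => r 0) _).symm
      _ = ∑ i ∈ C, ∑ r : Fin (k + 1) ↪ Fin n with r 0 = i, prPL n (k + 1) u r C :=
          (sum_subset (subset_univ C) fun i _ => hnotMem i).symm
      _ = ∑ i ∈ C, luceChoice u C i := by
          refine sum_congr rfl fun i hi => ?_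
          rw [sum_prPL_zero_eq u hi, ih (by rw [card_erase_of_mem hi]; lia), mul_one]
      _ = 1 := sum_luceChoice u (card_pos.1 (by lia))

lemma prPLset_nonneg (R : Finset (Fin k ↪ Fin n)) (C : Finset (Fin n)) :
    0 ≤ prPLset n k u R C :=
  sum_nonneg fun r _ => prPL_nonneg u r C

lemma topSet_succ_one (i : Fin n) :
    topSet n (k + 1) i 1 = ({r | r 0 = i} : Finset (Fin (k + 1) ↪ Fin n)) := by
  ext r
  simp [topSet]

lemma prPLset_topSet_one (hk : 1 ≤ k) {C : Finset (Fin n)} (hC : k ≤ #C) {i : Fin n}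
    (hi : i ∈ C) : prPLset n k u (topSet n k i 1) C = luceChoice u C i := by
  obtain ⟨k, rfl⟩ := Nat.exists_eq_add_of_le' hk
  have hcard : k ≤ #(C.erase i) := by rw [card_erase_of_mem hi]; lia
  rw [prPLset, topSet_succ_one, sum_prPL_zero_eq u hi, sum_prPL_eq_one u hcard, mul_one]

end PlackettLuce

section Consideration

variable {n k : ℕ} {p : Fin n → ℝ}

lemma considerWeight_nonneg (hp₀ : ∀ a, 0 ≤ p a) (hp₁ : ∀ a, p a ≤ 1) (C : Finset (Fin n)) :
    0 ≤ considerWeight n p C :=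
  mul_nonneg (prod_nonneg fun a _ => hp₀ a) (prod_nonneg fun a _ => sub_nonneg.2 (hp₁ a))

lemma mul_considerWeight_eq_insert {i : Fin n} {C : Finset (Fin n)} (hi : i ∉ C) :
    p i * considerWeight n p C = (1 - p i) * considerWeight n p (insert i C) := by
  rw [considerWeight, considerWeight, prod_insert hi, compl_insert,
    ← mul_prod_erase Cᶜ _ (mem_compl.2 hi)]
  ring

lemma mul_sum_considerWeight_notMem_le (hp₀ : ∀ a, 0 ≤ p a) (hp₁ : ∀ a, p a ≤ 1)
    {𝒜 : Finset (Finset (Fin n))} (h𝒜 : IsUpperSet (𝒜 : Set (Finset (Fin n)))) (i : Fin n) :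
    p i * ∑ C ∈ 𝒜 with i ∉ C, considerWeight n p C ≤
      (1 - p i) * ∑ C ∈ 𝒜 with i ∈ C, considerWeight n p C := by
  have hinj : Set.InjOn (insert i) (𝒜.filter (i ∉ ·) : Set (Finset (Fin n))) := by
    intro C hC D hD hCD
    rw [← erase_insert (mem_filter.1 hC).2, hCD, erase_insert (mem_filter.1 hD).2]
  have hsub : (𝒜.filter (i ∉ ·)).image (insert i) ⊆ 𝒜.filter (i ∈ ·) := by
    intro D hD
    obtain ⟨C, hC, rfl⟩ := mem_image.1 hD
    exact mem_filter.2 ⟨h𝒜 (subset_insert i C) (mem_filter.1 hC).1, mem_insert_self i C⟩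
  calc p i * ∑ C ∈ 𝒜 with i ∉ C, considerWeight n p C
      = (1 - p i) * ∑ C ∈ 𝒜 with i ∉ C, considerWeight n p (insert i C) := by
        rw [mul_sum, mul_sum]
        exact sum_congr rfl fun C hC => mul_considerWeight_eq_insert (mem_filter.1 hC).2
    _ = (1 - p i) * ∑ D ∈ (𝒜.filter (i ∉ ·)).image (insert i), considerWeight n p D := by
        rw [sum_image hinj]
    _ ≤ (1 - p i) * ∑ C ∈ 𝒜 with i ∈ C, considerWeight n p C :=
        mul_le_mul_of_nonneg_left
          (sum_le_sum_of_subset_of_nonneg hsub fun C _ _ => considerWeight_nonneg hp₀ hp₁ C)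
          (sub_nonneg.2 (hp₁ i))

/-- Harris' inequality for the increasing events `C ∈ 𝒜` and `i ∈ C`. -/
lemma mul_sum_considerWeight_le (hp₀ : ∀ a, 0 ≤ p a) (hp₁ : ∀ a, p a ≤ 1)
    {𝒜 : Finset (Finset (Fin n))} (h𝒜 : IsUpperSet (𝒜 : Set (Finset (Fin n)))) (i : Fin n) :
    p i * ∑ C ∈ 𝒜, considerWeight n p C ≤ ∑ C ∈ 𝒜 with i ∈ C, considerWeight n p C := by
  have hnotMem := mul_sum_considerWeight_notMem_le hp₀ hp₁ h𝒜 i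
  rw [← sum_filter_add_sum_filter_not 𝒜 (i ∈ ·)]
  linarith

lemma zConst_pos (hp₀ : ∀ a, 0 < p a) (hp₁ : ∀ a, p a ≤ 1) (hkn : k ≤ n) :
    0 < zConst n k p := by
  have huniv : 0 < considerWeight n p univ := by
    simpa [considerWeight] using prod_pos fun a _ => hp₀ a
  exact sum_pos' (fun C _ => considerWeight_nonneg (fun a => (hp₀ a).le) hp₁ C)
    ⟨univ, by simpa using hkn, huniv⟩

lemma prC_nonneg (hp₀ : ∀ a, 0 ≤ p a) (hp₁ : ∀ a, p a ≤ 1) (C : Finset (Fin n)) :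
    0 ≤ prC n k p C := by
  unfold prC
  split_ifs
  · exact div_nonneg (considerWeight_nonneg hp₀ hp₁ C)
      (sum_nonneg fun D _ => considerWeight_nonneg hp₀ hp₁ D)
  · exact le_rfl

lemma le_sum_prC_mem (hp₀ : ∀ a, 0 ≤ p a) (hp₁ : ∀ a, p a ≤ 1) (hz : 0 < zConst n k p)
    (i : Fin n) : p i ≤ ∑ C with i ∈ C, prC n k p C := by
  have hupper : IsUpperSet
      (({C | k ≤ #C} : Finset (Finset (Fin n))) : Set (Finset (Fin n))) := by
    intro C D hCD hC
    simp only [coe_filter, mem_univ, true_and, Set.mem_ofPred_eq] at hC ⊢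
    exact hC.trans (card_le_card hCD)
  calc p i ≤ (∑ C ∈ {C : Finset (Fin n) | k ≤ #C} with i ∈ C, considerWeight n p C) /
          zConst n k p := (le_div_iff₀ hz).2 (mul_sum_considerWeight_le hp₀ hp₁ hupper i)
    _ = ∑ C with i ∈ C, prC n k p C := by
        rw [filter_comm, sum_div, sum_filter]
        rfl

end Consideration

section PlackettLuceWithConsideration

variable {n k : ℕ} (u : Fin n → ℝ) {p : Fin n → ℝ}

lemma prPLCset_eq_sum (p : Fin n → ℝ) (R : Finset (Fin k ↪ Fin n)) :
    prPLCset n k u p R = ∑ C, prC n k p C * prPLset n k u R C := by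
  simp only [prPLCset, prPLC, prPLset, mul_sum]
  exact sum_comm

lemma prC_mul_luceChoice_univ_le (hp₀ : ∀ a, 0 ≤ p a) (hp₁ : ∀ a, p a ≤ 1) (hk : 1 ≤ k)
    {C : Finset (Fin n)} {i : Fin n} (hi : i ∈ C) :
    prC n k p C * luceChoice u univ i ≤ prC n k p C * prPLset n k u (topSet n k i 1) C := by
  by_cases hC : k ≤ #C
  · rw [prPLset_topSet_one u hk hC hi]
    exact mul_le_mul_of_nonneg_left (luceChoice_le_of_subset u ⟨i, hi⟩ (subset_univ C) i)
      (prC_nonneg hp₀ hp₁ C)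
  · simp [prC, hC]

lemma mul_luceChoice_univ_le_prPLCset (hp₀ : ∀ a, 0 ≤ p a) (hp₁ : ∀ a, p a ≤ 1)
    (hz : 0 < zConst n k p) (hk : 1 ≤ k) (i : Fin n) :
    p i * luceChoice u univ i ≤ prPLCset n k u p (topSet n k i 1) :=
  calc p i * luceChoice u univ i
      ≤ (∑ C with i ∈ C, prC n k p C) * luceChoice u univ i :=
        mul_le_mul_of_nonneg_right (le_sum_prC_mem hp₀ hp₁ hz i) (luceChoice_nonneg u univ i)
    _ ≤ ∑ C with i ∈ C, prC n k p C * prPLset n k u (topSet n k i 1) C := by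
        rw [sum_mul]
        exact sum_le_sum fun C hC =>
          prC_mul_luceChoice_univ_le u hp₀ hp₁ hk (mem_filter.1 hC).2
    _ ≤ ∑ C, prC n k p C * prPLset n k u (topSet n k i 1) C :=
        sum_le_sum_of_subset_of_nonneg (filter_subset _ _) fun C _ _ =>
          mul_nonneg (prC_nonneg hp₀ hp₁ C) (prPLset_nonneg u _ C)
    _ = prPLCset n k u p (topSet n k i 1) := (prPLCset_eq_sum u p _).symm

end PlackettLuceWithConsideration

lemma mul_exp_one_sub_le_one (x : ℝ) : x * Real.exp (1 - x) ≤ 1 :=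
  calc x * Real.exp (1 - x) = x * Real.exp (-x) * Real.exp 1 := by
        rw [mul_assoc, ← Real.exp_add, neg_add_eq_sub]
    _ ≤ Real.exp (-1) * Real.exp 1 :=
        mul_le_mul_of_nonneg_right (Real.mul_exp_neg_le_exp_neg_one x) (Real.exp_nonneg 1)
    _ = 1 := by rw [← Real.exp_add, neg_add_cancel, Real.exp_zero]

lemma nat_mul_pow_div_one_sub_pow_nonneg {q : ℝ} (hq₀ : 0 ≤ q) (hq₁ : q ≤ 1) (k : ℕ) :
    0 ≤ k * q ^ k / (1 - q ^ k) :=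
  div_nonneg (mul_nonneg k.cast_nonneg (pow_nonneg hq₀ k)) (sub_nonneg.2 (pow_le_one₀ hq₀ hq₁))

theorem upper_bound_repeated_applications_general (n k : ℕ) (u p : Fin n → ℝ) (i : Fin n)
    (hp : ∀ a, 0 < p a ∧ p a ≤ 1) (hk : 1 ≤ k) (hkn : k ≤ n) :
    p i ≤ (∑ j, Real.exp (u j)) / Real.exp (u i) * prPLCset n k u p (topSet n k i 1) := by
  have hz : 0 < zConst n k p := zConst_pos (fun a => (hp a).1) (fun a => (hp a).2) hkn
  have hsum : 0 < ∑ j, Real.exp (u j) := sum_pos (fun _ _ => Real.exp_pos _) ⟨i, mem_univ i⟩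
  calc p i = (∑ j, Real.exp (u j)) / Real.exp (u i) * (p i * luceChoice u univ i) := by
        rw [luceChoice]
        field_simp
    _ ≤ (∑ j, Real.exp (u j)) / Real.exp (u i) * prPLCset n k u p (topSet n k i 1) :=
        mul_le_mul_of_nonneg_left
          (mul_luceChoice_univ_le_prPLCset u (fun a => (hp a).1.le) (fun a => (hp a).2) hz hk i)
          (div_pos hsum (Real.exp_pos _)).le

/-- absolute upper bound on consideration probabilities. -/
theorem upper_bound_repeated_applications (n k : ℕ) (u p : Fin n → ℝ) (α : ℝ) (i : Fin n)
    (hp : ∀ a, 0 < p a ∧ p a ≤ 1) (hk : 1 ≤ k) (hkn : k ≤ n)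
    (hα : 1 < α) (hsum : α * k ≤ ∑ a, p a) :
    p i ≤ (∑ j, Real.exp (u j)) / Real.exp (u i) *
      (prPLCset n k u p (topSet n k i 1) +
        k * (α * Real.exp (1 - α)) ^ k / (1 - (α * Real.exp (1 - α)) ^ k)) := by
  have herror := nat_mul_pow_div_one_sub_pow_nonneg
    (mul_nonneg (zero_le_one.trans hα.le) (Real.exp_nonneg (1 - α))) (mul_exp_one_sub_le_one α) k
  refine (upper_bound_repeated_applications_general n k u p i hp hk hkn).trans ?_
  gcongr
  exact le_add_of_nonneg_right herror
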